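/- Let A be a finite alphabet. Let AT be the least Boolean algebra containing every language A*aA* for a ∈ A (the class of alphabet testable languages). Define the levels of the Straubing-Thérien hierarchy by ST₀ = {∅, A*}, ST_{1/2} = Pol(ST₀), ST₁ = Bool(ST_{1/2}), ST_{3/2} = Pol(ST₁) and ST₂ = Bool(ST_{3/2}). Then ST₂ = BPol(AT), i.e., Bool(Pol(Bool(Pol({∅, A*})))) = Bool(Pol(AT)). -/

import Mathlib

open Set

namespace Paper

abbrev Lang (A : Type) := Set (List A)
abbrev LClass (A : Type) := Set (Set (List A))

variable {A R M : Type}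

/-- A lattice of languages: contains `∅` and `A*`, closed under finite union
and finite intersection. -/
def LangLattice (𝒞 : LClass A) : Prop :=
  (∅ : Lang A) ∈ 𝒞 ∧ (Set.univ : Lang A) ∈ 𝒞 ∧
    (∀ K L : Lang A, K ∈ 𝒞 → L ∈ 𝒞 → K ∪ L ∈ 𝒞) ∧
    (∀ K L : Lang A, K ∈ 𝒞 → L ∈ 𝒞 → K ∩ L ∈ 𝒞)

/-- A Boolean algebra of languages: a lattice closed under complement. -/
def LangBoolAlg (𝒞 : LClass A) : Prop :=
  LangLattice 𝒞 ∧ ∀ L : Lang A, L ∈ 𝒞 → Lᶜ ∈ 𝒞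

/-- A class is quotient-closed when it is closed under left and right quotients
by words. -/
def QuotientClosed (𝒞 : LClass A) : Prop :=
  ∀ L ∈ 𝒞, ∀ w : List A,
    {u : List A | w ++ u ∈ L} ∈ 𝒞 ∧ {u : List A | u ++ w ∈ L} ∈ 𝒞

/-- The canonical preorder `≤_𝒞` associated with a class `𝒞`. -/
def cle (𝒞 : LClass A) (w w' : List A) : Prop := ∀ L ∈ 𝒞, w ∈ L → w' ∈ L

/-- The canonical equivalence `∼_𝒞` associated with a class `𝒞`. -/
def ceq (𝒞 : LClass A) (w w' : List A) : Prop := ∀ L ∈ 𝒞, (w ∈ L ↔ w' ∈ L)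

/-- The `∼_𝒞`-class of the word `w`. -/
def cclass (𝒞 : LClass A) (w : List A) : Lang A := {v | ceq 𝒞 w v}

/-- `D` is a `∼_𝒞`-class. -/
def IsCClass (𝒞 : LClass A) (D : Lang A) : Prop := ∃ w : List A, D = cclass 𝒞 w

/-- Multiplication of `∼_𝒞`-classes (the class of the concatenation of
representatives). -/
def cmul (𝒞 : LClass A) (D E : Lang A) : Lang A :=
  {x | ∃ u ∈ D, ∃ v ∈ E, ceq 𝒞 (u ++ v) x}

/-- Language concatenation. -/
def cat (K L : Lang A) : Lang A := {w | ∃ u ∈ K, ∃ v ∈ L, u ++ v = w}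

/-- Marked concatenation `K a L`. -/
def mcat (K : Lang A) (a : A) (L : Lang A) : Lang A :=
  {w | ∃ u ∈ K, ∃ v ∈ L, u ++ a :: v = w}

/-- Boolean closure: the least Boolean algebra containing `𝒞`. -/
def BoolC (𝒞 : LClass A) : LClass A := ⋂₀ {𝒟 : LClass A | LangBoolAlg 𝒟 ∧ 𝒞 ⊆ 𝒟}

/-- Polynomial closure: the least class containing `𝒞` closed under union and
marked concatenation. -/
def PolC (𝒞 : LClass A) : LClass A :=
  ⋂₀ {𝒟 : LClass A | 𝒞 ⊆ 𝒟 ∧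
    (∀ K L : Lang A, K ∈ 𝒟 → L ∈ 𝒟 → K ∪ L ∈ 𝒟) ∧
    (∀ (K L : Lang A) (a : A), K ∈ 𝒟 → L ∈ 𝒟 → mcat K a L ∈ 𝒟)}

/-- A cover of `L`: a finite set of languages whose union includes `L`. -/
def IsCover (Ks : LClass A) (L : Lang A) : Prop := Ks.Finite ∧ L ⊆ ⋃₀ Ks

/-- A `𝒞`-cover of `L`: a cover all of whose members belong to `𝒞`. -/
def IsCCover (𝒞 Ks : LClass A) (L : Lang A) : Prop := IsCover Ks L ∧ Ks ⊆ 𝒞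

/-- `α : A* → M` is a monoid morphism. -/
def IsMonoidMorphism [Monoid M] (α : List A → M) : Prop :=
  α [] = 1 ∧ ∀ u v : List A, α (u ++ v) = α u * α v

/-- `α` recognizes `L`. -/
def Recognizes [Monoid M] (α : List A → M) (L : Lang A) : Prop :=
  ∃ F : Set M, L = α ⁻¹' F

/-- A language is regular when it is recognized by a monoid morphism into a
finite monoid. -/
def RegularLang (L : Lang A) : Prop :=
  ∃ (N : Type) (_ : Monoid N) (_ : Finite N) (α : List A → N),
    IsMonoidMorphism α ∧ Recognizes α L

/-- The canonical order on a rating set: `r ≤ s` iff `r + s = s`. -/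
def rle [Add R] (r s : R) : Prop := r + s = s

/-- A rating map: maps `∅` to `0` and commutes with binary union. -/
def IsRatingMap [AddCommMonoid R] (ρ : Lang A → R) : Prop :=
  ρ ∅ = 0 ∧ ∀ K L : Lang A, ρ (K ∪ L) = ρ K + ρ L

/-- A nice rating map: the value of any language is a finite sum of values of
its words. -/
def IsNice [AddCommMonoid R] (ρ : Lang A → R) : Prop :=
  ∀ K : Lang A, ∃ l : List (List A), (∀ w ∈ l, w ∈ K) ∧
    ρ K = (l.map fun w => ρ {w}).sum

/-- A multiplicative rating map: also a morphism for concatenation. -/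
def IsMultiplicative [Semiring R] (ρ : Lang A → R) : Prop :=
  ρ ({[]} : Lang A) = 1 ∧ ∀ K L : Lang A, ρ (cat K L) = ρ K * ρ L

/-- An endomorphism of the additive monoid `(R, +)`. -/
def IsAddEndo [AddCommMonoid R] (γ : R → R) : Prop :=
  γ 0 = 0 ∧ ∀ r s : R, γ (r + s) = γ r + γ s

/-- A quasi-multiplicative rating map for the endomorphism `γ`. -/
def IsQuasiMult [Semiring R] (ρ : Lang A → R) (γ : R → R) : Prop :=
  IsAddEndo γ ∧ (∀ q r s : R, γ (q * γ r * s) = γ (q * r * s)) ∧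
    ∀ K L : Lang A, ρ (cat K L) = γ (ρ K * ρ L)

/-- The `ρ`-imprint of a set of languages. -/
def imprint [Add R] (ρ : Lang A → R) (Ks : LClass A) : Set R :=
  {r | ∃ K ∈ Ks, rle r (ρ K)}

/-- The `𝒟`-optimal `ρ`-imprint on `L` (the imprint of any optimal `𝒟`-cover
of `L`, i.e. the intersection of the imprints of all `𝒟`-covers of `L`). -/
def optImprint [Add R] (𝒟 : LClass A) (ρ : Lang A → R) (L : Lang A) : Set R :=
  {r | ∀ Ks : LClass A, IsCCover 𝒟 Ks L → r ∈ imprint ρ Ks}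

/-- Downset operation on subsets of a rating set. -/
def dclos [Add R] (U : Set R) : Set R := {r | ∃ s ∈ U, rle r s}

/-- Pointwise multiplication of subsets of a rating set. -/
def smul [Mul R] (U V : Set R) : Set R := {x | ∃ u ∈ U, ∃ v ∈ V, u * v = x}

def hstar (B : Set A) : Lang A := {w | ∀ x ∈ w, x ∈ B}

def hmon : Set A → List (A × Set A) → Lang A
  | B, [] => hstar B
  | B, p :: t => mcat (hstar B) p.1 (hmon p.2 t)

inductive HF : Lang A → Prop
  | empty : HF ∅
  | mon (B : Set A) (t : List (A × Set A)) : HF (hmon B t)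
  | union (K L : Lang A) : HF K → HF L → HF (K ∪ L)

theorem mcat_assoc' (K L M : Lang A) (a b : A) :
    mcat (mcat K a L) b M = mcat K a (mcat L b M) := by
  ext w
  constructor
  · rintro ⟨_, ⟨u, hu, v, hv, rfl⟩, z, hz, rfl⟩
    exact ⟨u, hu, _, ⟨v, hv, z, hz, rfl⟩, by simp⟩
  · rintro ⟨u, hu, _, ⟨v, hv, z, hz, rfl⟩, rfl⟩
    exact ⟨_, ⟨u, hu, v, hv, rfl⟩, z, hz, by simp⟩

theorem mcat_union_left (K L M : Lang A) (a : A) :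
    mcat (K ∪ L) a M = mcat K a M ∪ mcat L a M := by
  ext w
  constructor
  · rintro ⟨u, hu | hu, v, hv, rfl⟩
    · exact Or.inl ⟨u, hu, v, hv, rfl⟩
    · exact Or.inr ⟨u, hu, v, hv, rfl⟩
  · rintro (⟨u, hu, v, hv, rfl⟩ | ⟨u, hu, v, hv, rfl⟩)
    · exact ⟨u, Or.inl hu, v, hv, rfl⟩
    · exact ⟨u, Or.inr hu, v, hv, rfl⟩

theorem mcat_union_right (K L M : Lang A) (a : A) :
    mcat M a (K ∪ L) = mcat M a K ∪ mcat M a L := by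
  ext w
  constructor
  · rintro ⟨u, hu, v, hv | hv, rfl⟩
    · exact Or.inl ⟨u, hu, v, hv, rfl⟩
    · exact Or.inr ⟨u, hu, v, hv, rfl⟩
  · rintro (⟨u, hu, v, hv, rfl⟩ | ⟨u, hu, v, hv, rfl⟩)
    · exact ⟨u, hu, v, Or.inl hv, rfl⟩
    · exact ⟨u, hu, v, Or.inr hv, rfl⟩

theorem mcat_empty_left (M : Lang A) (a : A) : mcat ∅ a M = ∅ := by
  ext w
  constructor
  · rintro ⟨u, hu, v, hv, rfl⟩
    exact hu.elim
  · exact fun h => h.elim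

theorem mcat_empty_right (M : Lang A) (a : A) : mcat M a ∅ = ∅ := by
  ext w
  constructor
  · rintro ⟨u, hu, v, hv, rfl⟩
    exact hv.elim
  · exact fun h => h.elim

theorem hmon_mcat (s : List (A × Set A)) : ∀ (B : Set A) (a : A) (C : Set A)
    (t : List (A × Set A)), mcat (hmon B s) a (hmon C t) = hmon B (s ++ (a, C) :: t) := by
  induction s with
  | nil => intro B a C t; rfl
  | cons p s ih =>
    intro B a C t
    simp only [hmon, List.cons_append]
    rw [mcat_assoc', ih]

theorem HF.mcat {K L : Lang A} (hK : HF K) (a : A) (hL : HF L) : HF (mcat K a L) := by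
  induction hK with
  | empty => rw [mcat_empty_left]; exact .empty
  | union K K' _ _ h1 h2 => rw [mcat_union_left]; exact .union _ _ h1 h2
  | mon B s =>
    induction hL with
    | empty => rw [mcat_empty_right]; exact .empty
    | union K K' _ _ h1 h2 => rw [mcat_union_right]; exact .union _ _ h1 h2
    | mon C t => rw [hmon_mcat]; exact .mon _ _

theorem HF.guard (p : Prop) {L : Lang A} (h : HF L) : HF {w | p ∧ w ∈ L} := by
  by_cases hp : p
  · simpa [hp] using h
  · simpa [hp] using HF.empty

theorem HF.star (B : Set A) : HF (hstar B) := HF.mon B []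

theorem hstar_inter (B C : Set A) : hstar B ∩ hstar C = hstar (B ∩ C) := by
  ext w
  simp only [hstar, Set.mem_inter_iff, Set.mem_setOf_eq]
  grind

theorem inter1 (B C : Set A) (a : A) (X : Lang A) :
    mcat (hstar B) a X ∩ hstar C =
      {w | a ∈ C ∧ w ∈ mcat (hstar (B ∩ C)) a (X ∩ hstar C)} := by
  ext w
  constructor
  · rintro ⟨⟨u, hu, v, hv, rfl⟩, h⟩
    simp only [hstar, Set.mem_setOf_eq] at hu h
    refine ⟨h a (by simp), u, ?_, v, ⟨hv, ?_⟩, rfl⟩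
    · intro x hx; exact ⟨hu x hx, h x (by simp [hx])⟩
    · intro x hx; exact h x (by simp [hx])
  · rintro ⟨ha, u, hu, v, ⟨hv, hv'⟩, rfl⟩
    refine ⟨⟨u, fun x hx => (hu x hx).1, v, hv, rfl⟩, ?_⟩
    intro x hx
    rcases List.mem_append.1 hx with h | h
    · exact (hu x h).2
    · rcases List.mem_cons.1 h with rfl | h
      · exact ha
      · exact hv' x h

theorem inter2 (B C : Set A) (a b : A) (X Y : Lang A) :
    mcat (hstar B) a X ∩ mcat (hstar C) b Y =
      {w | a ∈ C ∧ w ∈ mcat (hstar (B ∩ C)) a (X ∩ mcat (hstar C) b Y)} ∪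
      ({w | b ∈ B ∧ w ∈ mcat (hstar (B ∩ C)) b (mcat (hstar B) a X ∩ Y)} ∪
      {w | a = b ∧ w ∈ mcat (hstar (B ∩ C)) a (X ∩ Y)}) := by
  ext w
  constructor
  · rintro ⟨⟨u, hu, v, hv, rfl⟩, ⟨u', hu', v', hv', h⟩⟩
    simp only [hstar, Set.mem_setOf_eq] at hu hu'
    rcases List.append_eq_append_iff.1 h with ⟨z, rfl, hz⟩ | ⟨z, rfl, hz⟩
    · cases z with
      | nil =>
        simp only [List.nil_append, List.cons.injEq] at hz
        obtain ⟨rfl, rfl⟩ := hz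
        exact Or.inr (Or.inr ⟨rfl, u', fun x hx => ⟨hu x (by simp [hx]), hu' x hx⟩, v',
          ⟨hv, hv'⟩, by simp⟩)
      | cons c z =>
        simp only [List.cons_append, List.cons.injEq] at hz
        obtain ⟨rfl, rfl⟩ := hz
        refine Or.inr (Or.inl ⟨hu _ (by simp), u', fun x hx => ⟨hu x (by simp [hx]), hu' x hx⟩, _,
          ⟨⟨z, fun x hx => hu x (by simp [hx]), v, hv, rfl⟩, hv'⟩, by simp⟩)
    · cases z with
      | nil =>
        simp only [List.nil_append, List.cons.injEq] at hz
        obtain ⟨rfl, rfl⟩ := hz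
        exact Or.inr (Or.inr ⟨rfl, u, fun x hx => ⟨hu x hx, hu' x (by simp [hx])⟩, _,
          ⟨hv, hv'⟩, rfl⟩)
      | cons c z =>
        simp only [List.cons_append, List.cons.injEq] at hz
        obtain ⟨rfl, rfl⟩ := hz
        refine Or.inl ⟨hu' _ (by simp), u, fun x hx => ⟨hu x hx, hu' x (by simp [hx])⟩, _,
          ⟨hv, ⟨z, fun x hx => hu' x (by simp [hx]), v', hv', rfl⟩⟩, rfl⟩
  · rintro (⟨ha, u, hu, _, ⟨hv, ⟨z, hz, v', hv', rfl⟩⟩, rfl⟩ |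
      ⟨hb, u, hu, _, ⟨⟨z, hz, v', hv', rfl⟩, hv⟩, rfl⟩ | ⟨rfl, u, hu, v, ⟨hv, hv'⟩, rfl⟩)
    · refine ⟨⟨u, fun x hx => (hu x hx).1, _, hv, rfl⟩, u ++ a :: z, ?_, v', hv', by simp⟩
      intro x hx
      rcases List.mem_append.1 hx with h | h
      · exact (hu x h).2
      · rcases List.mem_cons.1 h with rfl | h
        · exact ha
        · exact hz x h
    · refine ⟨⟨u ++ b :: z, ?_, v', hv', by simp⟩, u, fun x hx => (hu x hx).2, _, hv, rfl⟩
      intro x hx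
      rcases List.mem_append.1 hx with h | h
      · exact (hu x h).1
      · rcases List.mem_cons.1 h with rfl | h
        · exact hb
        · exact hz x h
    · exact ⟨⟨u, fun x hx => (hu x hx).1, v, hv, rfl⟩, u, fun x hx => (hu x hx).2, v, hv', rfl⟩

theorem hmon_inter (s : List (A × Set A)) : ∀ (B C : Set A) (t : List (A × Set A)),
    HF (hmon B s ∩ hmon C t) := by
  induction s with
  | nil =>
    intro B C t
    induction t generalizing C with
    | nil => simp only [hmon]; rw [hstar_inter]; exact .star _
    | cons q t iht =>
      simp only [hmon]
      rw [Set.inter_comm, inter1]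
      refine HF.guard _ (HF.mcat (.star _) _ ?_)
      rw [Set.inter_comm]
      exact iht _
  | cons p s ih =>
    intro B C t
    induction t generalizing C with
    | nil =>
      simp only [hmon]
      rw [inter1]
      exact HF.guard _ (HF.mcat (.star _) _ (ih p.2 C []))
    | cons q t iht =>
      simp only [hmon]
      rw [inter2]
      exact .union _ _ (HF.guard _ (HF.mcat (.star _) _ (ih p.2 C (q :: t))))
        (.union _ _ (HF.guard _ (HF.mcat (.star _) _ (iht q.2)))
          (HF.guard _ (HF.mcat (.star _) _ (ih _ _ _))))

theorem HF.inter {K L : Lang A} (hK : HF K) (hL : HF L) : HF (K ∩ L) := by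
  induction hK with
  | empty => rw [Set.empty_inter]; exact .empty
  | union K K' _ _ h1 h2 => rw [Set.union_inter_distrib_right]; exact .union _ _ h1 h2
  | mon B s =>
    induction hL with
    | empty => rw [Set.inter_empty]; exact .empty
    | union K K' _ _ h1 h2 => rw [Set.inter_union_distrib_left]; exact .union _ _ h1 h2
    | mon C t => exact hmon_inter _ _ _ _

theorem HF.univ : HF (Set.univ : Lang A) := by
  have h := HF.star (Set.univ : Set A)
  have e : hstar (Set.univ : Set A) = Set.univ := by ext w; simp [hstar]
  rwa [e] at h

/-- words containing a given scattered subword -/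
def hsub : List A → Lang A
  | [] => Set.univ
  | a :: l => mcat Set.univ a (hsub l)

inductive HG : Lang A → Prop
  | empty : HG ∅
  | sub (l : List A) : HG (hsub l)
  | union (K L : Lang A) : HG K → HG L → HG (K ∪ L)

theorem hsub_up (l : List A) (x y : List A) (h : x ∈ hsub l) : y ++ x ∈ hsub l := by
  cases l with
  | nil => trivial
  | cons a l =>
    obtain ⟨u, -, v, hv, rfl⟩ := h
    exact ⟨y ++ u, trivial, v, hv, by simp⟩

theorem hsub_mcat (l m : List A) (a : A) :
    mcat (hsub l) a (hsub m) = hsub (l ++ a :: m) := by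
  induction l with
  | nil => rfl
  | cons b l ih => simp only [hsub, List.cons_append]; rw [mcat_assoc', ih]

theorem HG.mcat {K L : Lang A} (hK : HG K) (a : A) (hL : HG L) : HG (mcat K a L) := by
  induction hK with
  | empty => rw [mcat_empty_left]; exact .empty
  | union K K' _ _ h1 h2 => rw [mcat_union_left]; exact .union _ _ h1 h2
  | sub l =>
    induction hL with
    | empty => rw [mcat_empty_right]; exact .empty
    | union K K' _ _ h1 h2 => rw [mcat_union_right]; exact .union _ _ h1 h2
    | sub m => rw [hsub_mcat]; exact .sub _

theorem hsub_HF (l : List A) : HF (hsub l) := by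
  induction l with
  | nil => exact .univ
  | cons a l ih => exact HF.mcat .univ a ih

theorem hsub_compl (a : A) (l : List A) :
    (hsub (a :: l))ᶜ = hstar {a}ᶜ ∪ mcat (hstar {a}ᶜ) a (hsub l)ᶜ := by
  ext w
  constructor
  · intro hw
    by_cases ha : a ∈ w
    · obtain ⟨u, v, rfl, hu⟩ := List.eq_append_cons_of_mem ha
      refine Or.inr ⟨u, ?_, v, fun hv => hw ⟨u, trivial, v, hv, rfl⟩, rfl⟩
      rintro x hx rfl
      exact hu hx
    · refine Or.inl ?_
      rintro x hx rfl
      exact ha hx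
  · rintro (hw | ⟨u, hu, v, hv, rfl⟩)
    · rintro ⟨u, -, v, hv, rfl⟩
      exact hw a (by simp) rfl
    · rintro ⟨u', -, v', hv', h⟩
      apply hv
      rcases List.append_eq_append_iff.1 h with ⟨z, rfl, hz⟩ | ⟨z, rfl, hz⟩
      · cases z with
        | nil =>
          simp only [List.nil_append, List.cons.injEq] at hz
          obtain ⟨-, rfl⟩ := hz
          exact hv'
        | cons c z =>
          simp only [List.cons_append, List.cons.injEq] at hz
          obtain ⟨rfl, rfl⟩ := hz
          exact (hu a (by simp) rfl).elim
      · cases z with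
        | nil =>
          simp only [List.nil_append, List.cons.injEq] at hz
          obtain ⟨-, rfl⟩ := hz
          exact hv'
        | cons c z =>
          simp only [List.cons_append, List.cons.injEq] at hz
          obtain ⟨rfl, rfl⟩ := hz
          have := hsub_up l v' (z ++ [a]) hv'
          simpa using this

theorem hsub_compl_HF (l : List A) : HF (hsub l)ᶜ := by
  induction l with
  | nil => simpa [hsub] using HF.empty
  | cons a l ih =>
    rw [hsub_compl]
    exact .union _ _ (.star _) (HF.mcat (.star _) a ih)

theorem HG.both {L : Lang A} (h : HG L) : HF L ∧ HF Lᶜ := by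
  induction h with
  | empty => exact ⟨.empty, by simpa using HF.univ⟩
  | sub l => exact ⟨hsub_HF l, hsub_compl_HF l⟩
  | union K L _ _ h1 h2 =>
    exact ⟨.union _ _ h1.1 h2.1, by rw [Set.compl_union]; exact h1.2.inter h2.2⟩

theorem BoolC_alg (𝒞 : LClass A) : LangBoolAlg (BoolC 𝒞) := by
  refine ⟨⟨?_, ?_, ?_, ?_⟩, ?_⟩
  · exact fun D hD => hD.1.1.1
  · exact fun D hD => hD.1.1.2.1
  · exact fun K L hK hL D hD => hD.1.1.2.2.1 K L (hK D hD) (hL D hD)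
  · exact fun K L hK hL D hD => hD.1.1.2.2.2 K L (hK D hD) (hL D hD)
  · exact fun K hK D hD => hD.1.2 K (hK D hD)

theorem subset_BoolC (𝒞 : LClass A) : 𝒞 ⊆ BoolC 𝒞 := fun _ hL _ hD => hD.2 hL

theorem BoolC_min {𝒞 𝒟 : LClass A} (h : LangBoolAlg 𝒟) (h' : 𝒞 ⊆ 𝒟) : BoolC 𝒞 ⊆ 𝒟 :=
  fun _ hL => hL 𝒟 ⟨h, h'⟩

theorem BoolC_mono {𝒞 𝒟 : LClass A} (h : 𝒞 ⊆ 𝒟) : BoolC 𝒞 ⊆ BoolC 𝒟 :=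
  BoolC_min (BoolC_alg _) (h.trans (subset_BoolC _))

theorem subset_PolC (𝒞 : LClass A) : 𝒞 ⊆ PolC 𝒞 := fun _ hL _ hD => hD.1 hL

theorem PolC_union {𝒞 : LClass A} {K L : Lang A} (hK : K ∈ PolC 𝒞) (hL : L ∈ PolC 𝒞) :
    K ∪ L ∈ PolC 𝒞 := fun D hD => hD.2.1 K L (hK D hD) (hL D hD)

theorem PolC_mcat {𝒞 : LClass A} {K L : Lang A} (a : A) (hK : K ∈ PolC 𝒞) (hL : L ∈ PolC 𝒞) :
    mcat K a L ∈ PolC 𝒞 := fun D hD => hD.2.2 K L a (hK D hD) (hL D hD)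

theorem PolC_mono {𝒞 𝒟 : LClass A} (h : 𝒞 ⊆ 𝒟) : PolC 𝒞 ⊆ PolC 𝒟 :=
  fun _ hL => hL _ ⟨h.trans (subset_PolC _), fun _ _ => PolC_union, fun _ _ a => PolC_mcat a⟩

theorem ST32_sub_HF (L : Lang A)
    (h : L ∈ PolC (BoolC (PolC ({∅, Set.univ} : LClass A)))) : HF L := by
  refine h {L | HF L} ⟨?_, fun K L => HF.union K L, fun K L a hK hL => HF.mcat hK a hL⟩
  have h1 : PolC ({∅, Set.univ} : LClass A) ⊆ {L | HG L} := by
    intro L hL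
    refine hL {L | HG L} ⟨?_, fun K L => HG.union K L, fun K L a hK hL => HG.mcat hK a hL⟩
    rintro L (rfl | rfl)
    · exact HG.empty
    · exact HG.sub []
  have h2 : BoolC (PolC ({∅, Set.univ} : LClass A)) ⊆ {L | HF L ∧ HF Lᶜ} := by
    refine BoolC_min ⟨⟨?_, ?_, ?_, ?_⟩, ?_⟩ (fun L hL => (h1 hL).both)
    · exact ⟨.empty, by simpa using HF.univ⟩
    · exact ⟨.univ, by simpa using HF.empty⟩
    · exact fun K L hK hL => ⟨.union _ _ hK.1 hL.1, by rw [Set.compl_union]; exact hK.2.inter hL.2⟩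
    · exact fun K L hK hL => ⟨hK.1.inter hL.1, by rw [Set.compl_inter]; exact .union _ _ hK.2 hL.2⟩
    · exact fun K hK => ⟨hK.2, by rw [compl_compl]; exact hK.1⟩
  exact fun L hL => (h2 hL).1

theorem hstar_AT [Fintype A] (B : Set A) :
    hstar B ∈ BoolC {L : Lang A | ∃ a : A, L = {w : List A | a ∈ w}} := by
  classical
  have key : ∀ S : Finset A, {w : List A | ∀ a ∈ S, a ∉ w} ∈
      BoolC {L : Lang A | ∃ a : A, L = {w : List A | a ∈ w}} := by
    intro S
    induction S using Finset.induction_on with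
    | empty => simpa using (BoolC_alg _).1.2.1
    | insert a S _ ih =>
      have e : {w : List A | ∀ b ∈ insert a S, b ∉ w} =
          {w : List A | a ∈ w}ᶜ ∩ {w : List A | ∀ a ∈ S, a ∉ w} := by
        ext w; simp
      rw [e]
      exact (BoolC_alg _).1.2.2.2 _ _ ((BoolC_alg _).2 _ (subset_BoolC _ ⟨a, rfl⟩)) ih
  have e : hstar B = {w : List A | ∀ a ∈ Finset.univ.filter (fun a => a ∉ B), a ∉ w} := by
    ext w
    simp only [hstar, Set.mem_setOf_eq, Finset.mem_filter, Finset.mem_univ, true_and]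
    grind
  rw [e]
  exact key _

theorem HF_sub_Pol [Fintype A] (L : Lang A) (h : HF L) :
    L ∈ PolC (BoolC {L : Lang A | ∃ a : A, L = {w : List A | a ∈ w}}) := by
  induction h with
  | empty => exact subset_PolC _ (BoolC_alg _).1.1
  | union K L _ _ h1 h2 => exact PolC_union h1 h2
  | mon B t =>
    induction t generalizing B with
    | nil => exact subset_PolC _ (hstar_AT B)
    | cons p t ih => exact PolC_mcat _ (subset_PolC _ (hstar_AT B)) (ih _)

/-- Level two of the Straubing-Thérien hierarchy equals
`BPol(AT)`, where `AT` is the class of alphabet testable languages. -/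
theorem statement19 {A : Type} [Fintype A] :
    BoolC (PolC (BoolC (PolC ({∅, Set.univ} : LClass A)))) =
      BoolC (PolC (BoolC
        {L : Lang A | ∃ a : A, L = {w : List A | a ∈ w}})) := by
  apply Set.Subset.antisymm
  · exact BoolC_mono fun L hL => HF_sub_Pol L (ST32_sub_HF L hL)
  · refine BoolC_mono (PolC_mono (BoolC_mono ?_))
    rintro L ⟨a, rfl⟩
    have e : {w : List A | a ∈ w} = mcat Set.univ a Set.univ := by
      ext w
      constructor
      · intro h
        obtain ⟨u, v, rfl⟩ := List.append_of_mem h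
        exact ⟨u, trivial, v, trivial, rfl⟩
      · rintro ⟨u, -, v, -, rfl⟩
        simp
    rw [e]
    exact PolC_mcat a (subset_PolC _ (Or.inr rfl)) (subset_PolC _ (Or.inr rfl))

end Paper
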